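/- For every γ > 2, the infimum over all Borel probability measures μ on the unit sphere S² ⊂ ℝ³ with ∫_{S²} x dμ(x) = 0 of the quantity D(μ‖σ) − 2γ ∬_{S²×S²} log(1/|x−y|) dμ(x) dμ(y) equals −∞; that is, for every C ∈ ℝ there exists such a μ (absolutely continuous with respect to σ) with 2γ ∬ log(1/|x−y|) dμ dμ > D(μ‖σ) + C. Together with the bound for γ < 2, this shows the reduced analytic stability threshold δ^A(ℙ¹,0)^𝒢 equals exactly 2. -/

import Mathlib

open MeasureTheory
open scoped ENNReal Classical

/-- Euclidean three-space, containing the unit two-sphere. -/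
abbrev E3 : Type := EuclideanSpace ℝ (Fin 3)

/-- The relative entropy (Kullback–Leibler divergence) `D(μ‖ν)`, equal to
`∫ log(dμ/dν) dμ` when `μ ≪ ν` and this integral is defined, and `∞` otherwise. -/
noncomputable def relEnt {α : Type*} [MeasurableSpace α] (μ ν : Measure α) : ℝ≥0∞ :=
  if μ ≪ ν ∧ Integrable (fun x => Real.log (μ.rnDeriv ν x).toReal) μ then
    ENNReal.ofReal (∫ x, Real.log (μ.rnDeriv ν x).toReal ∂μ)
  else ∞

/-!
Let `d = dim E`. Take for `μ` the normalized restriction of `σ` to two antipodal caps of radius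
`r`. The barycenter of `μ` vanishes by symmetry. As `r → 0` a cap has mass at least of order `r ^ (d - 1)`,
so the entropy of `μ` is at most `(d - 1) log (1 / r) + O(1)`; half of the mass of `μ ⊗ μ` lies on
pairs of points in a common cap, so the logarithmic energy is at least `(1 / 2) log (1 / r)`. Hence
`2 γ` times the energy outgrows the entropy as soon as `γ > d - 1`.
-/

open Set Metric Module ProbabilityTheory
open scoped RealInnerProductSpace Topology

section LogKernel

/-- The kernel `log (2 / t)` of the logarithmic energy, cut off at `0` for `t > 2`. The value at
`t = 0` is set to `∞`, since `Real.log 0 = 0` would give `log 2`. -/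
noncomputable def logKernel (t : ℝ) : ℝ≥0∞ :=
  if t = 0 then ∞ else ENNReal.ofReal (Real.log 2 - Real.log t)

lemma logKernel_zero : logKernel 0 = ∞ := if_pos rfl

lemma logKernel_of_ne_zero {t : ℝ} (ht : t ≠ 0) :
    logKernel t = ENNReal.ofReal (Real.log 2 - Real.log t) := if_neg ht

@[fun_prop]
lemma measurable_logKernel : Measurable logKernel :=
  Measurable.ite (measurableSet_singleton 0) measurable_const
    (ENNReal.measurable_ofReal.comp (measurable_const.sub Real.measurable_log))

lemma antitoneOn_logKernel : AntitoneOn logKernel (Ici 0) := by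
  intro s hs t _ hst
  rcases (mem_Ici.1 hs).eq_or_lt with rfl | hs_pos
  · simp [logKernel_zero]
  · rw [logKernel_of_ne_zero hs_pos.ne', logKernel_of_ne_zero (hs_pos.trans_le hst).ne']
    gcongr

lemma logKernel_two_mul {r : ℝ} (hr : r ≠ 0) :
    logKernel (2 * r) = ENNReal.ofReal (-Real.log r) := by
  rw [logKernel_of_ne_zero (by positivity), Real.log_mul two_ne_zero hr, sub_add_cancel_left]

lemma logKernel_of_two_le {t : ℝ} (ht : 2 ≤ t) : logKernel t = 0 := by
  rw [logKernel_of_ne_zero (by linarith), ENNReal.ofReal_eq_zero, sub_nonpos]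
  exact Real.log_le_log two_pos ht

lemma lintegral_logKernel_abs_ne_top : ∫⁻ t : ℝ, logKernel |t| ≠ ∞ := by
  have h_integrable : IntegrableOn (fun t => Real.log 2 - Real.log t) (Ioc (-2) 2) :=
    (intervalIntegrable_const.sub intervalIntegral.intervalIntegrable_log').1
  have h_eq : ∫⁻ t : ℝ, logKernel |t| =
      ∫⁻ t in Ioc (-2 : ℝ) 2, ENNReal.ofReal (Real.log 2 - Real.log t) := by
    rw [← lintegral_indicator measurableSet_Ioc]
    refine lintegral_congr_ae ?_
    filter_upwards [Measure.ae_ne volume 0] with t ht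
    by_cases hmem : t ∈ Ioc (-2) 2
    · rw [indicator_of_mem hmem, logKernel_of_ne_zero (abs_ne_zero.2 ht), Real.log_abs]
    · rw [indicator_of_notMem hmem]
      refine logKernel_of_two_le (le_abs'.2 ?_)
      by_contra! h
      exact hmem ⟨h.1, h.2.le⟩
  rw [h_eq]
  exact h_integrable.lintegral_lt_top.ne

end LogKernel

section LogEnergy

variable {X : Type*} [PseudoMetricSpace X] [MeasurableSpace X] {μ : Measure X}

/-- The logarithmic potential `x ↦ ∫ log (2 / |x - y|) dμ(y)`, with the cut-off kernel
`logKernel`. -/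
noncomputable def logPotential (μ : Measure X) (x : X) : ℝ≥0∞ :=
  ∫⁻ y, logKernel (dist x y) ∂μ

/-- The logarithmic energy `∬ log (2 / |x - y|) dμ(x) dμ(y)`, with the cut-off kernel
`logKernel`; on measures with atoms it is `∞`. -/
noncomputable def logEnergy (μ : Measure X) : ℝ≥0∞ :=
  ∫⁻ p : X × X, logKernel (dist p.1 p.2) ∂(μ.prod μ)

lemma logEnergy_cond_le [SFinite μ] (A : Set X) :
    logEnergy μ[|A] ≤ (μ A)⁻¹ * ((μ A)⁻¹ * logEnergy μ) := by
  simp only [logEnergy, ProbabilityTheory.cond]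
  rw [Measure.prod_smul_left, Measure.prod_smul_right, lintegral_smul_measure,
    lintegral_smul_measure, smul_eq_mul, smul_eq_mul, Measure.prod_restrict]
  gcongr
  exact Measure.restrict_le_self

lemma logEnergy_cond_ne_top [SFinite μ] {A : Set X} (hA : μ A ≠ 0) (hμ : logEnergy μ ≠ ∞) :
    logEnergy μ[|A] ≠ ∞ := by
  have hA_inv : (μ A)⁻¹ ≠ ∞ := ENNReal.inv_ne_top.2 hA
  exact ne_top_of_le_ne_top (ENNReal.mul_ne_top hA_inv (ENNReal.mul_ne_top hA_inv hμ))
    (logEnergy_cond_le A)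

variable [OpensMeasurableSpace X]

lemma logKernel_mul_measure_ball_sq_le_logEnergy [SFinite μ] {x y : X} {r : ℝ}
    (hxy : Disjoint (ball x r) (ball y r)) :
    logKernel (2 * r) * (μ (ball x r) ^ 2 + μ (ball y r) ^ 2) ≤ logEnergy μ := by
  have h_same_ball {z : X} {p : X × X} (hp : p ∈ ball z r ×ˢ ball z r) :
      logKernel (2 * r) ≤ logKernel (dist p.1 p.2) := by
    have h_dist : dist p.1 p.2 ≤ 2 * r := by
      linarith [dist_triangle_right p.1 p.2 z, mem_ball.1 hp.1, mem_ball.1 hp.2]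
    exact antitoneOn_logKernel dist_nonneg (dist_nonneg.trans h_dist) h_dist
  have h_meas (z : X) : MeasurableSet (ball z r ×ˢ ball z r) :=
    measurableSet_ball.prod measurableSet_ball
  calc logKernel (2 * r) * (μ (ball x r) ^ 2 + μ (ball y r) ^ 2)
      = ∫⁻ _ in ball x r ×ˢ ball x r ∪ ball y r ×ˢ ball y r, logKernel (2 * r) ∂(μ.prod μ) := by
        rw [setLIntegral_const, measure_union (disjoint_prod.2 (.inl hxy)) (h_meas y),
          Measure.prod_prod, Measure.prod_prod, sq, sq]
    _ ≤ ∫⁻ p in ball x r ×ˢ ball x r ∪ ball y r ×ˢ ball y r,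
          logKernel (dist p.1 p.2) ∂(μ.prod μ) :=
        setLIntegral_mono' ((h_meas x).union (h_meas y)) fun _ hp => hp.elim h_same_ball h_same_ball
    _ ≤ logEnergy μ := setLIntegral_le_lintegral _ _

variable [SecondCountableTopology X]

lemma logEnergy_eq_lintegral_logPotential [SFinite μ] :
    logEnergy μ = ∫⁻ x, logPotential μ x ∂μ :=
  lintegral_prod _ (by fun_prop)

-- Finiteness of the energy forces the diagonal, where the two integrands differ, to be null.
lemma lintegral_ofReal_log_dist_eq_logEnergy (hμ : logEnergy μ ≠ ∞) :
    ∫⁻ p : X × X, ENNReal.ofReal (Real.log 2 - Real.log (dist p.1 p.2)) ∂(μ.prod μ) =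
      logEnergy μ := by
  refine lintegral_congr_ae ?_
  filter_upwards [ae_lt_top (by fun_prop) hμ] with p hp
  have h_dist : dist p.1 p.2 ≠ 0 := fun h => hp.ne (by rw [h, logKernel_zero])
  exact (logKernel_of_ne_zero h_dist).symm

-- A `1`-Lipschitz function straightens the curve `c`, and the kernel decreases with the distance.
lemma setLIntegral_logPotential_curve_le [SFinite μ] {c : ℝ → X} (hc : Continuous c) {f : X → ℝ}
    (hf : LipschitzWith 1 f) {s : Set ℝ} (hs : MeasurableSet s) (hfc : ∀ t ∈ s, f (c t) = t) :
    ∫⁻ t in s, logPotential μ (c t) ≤ (∫⁻ t : ℝ, logKernel |t|) * μ univ := by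
  have h_inner (y : X) :
      ∫⁻ t in s, logKernel (dist (c t) y) ≤ ∫⁻ t : ℝ, logKernel |t| :=
    calc ∫⁻ t in s, logKernel (dist (c t) y)
        ≤ ∫⁻ t in s, logKernel |t - f y| := by
          refine setLIntegral_mono' hs fun t ht => ?_
          have h_lip : |t - f y| ≤ dist (c t) y := by
            simpa [hfc t ht, Real.dist_eq] using hf.dist_le_mul (c t) y
          exact antitoneOn_logKernel (abs_nonneg (t - f y)) dist_nonneg h_lip
      _ ≤ ∫⁻ t, logKernel |t - f y| := setLIntegral_le_lintegral _ _
      _ = ∫⁻ t : ℝ, logKernel |t| :=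
          lintegral_sub_right_eq_self (fun t => logKernel |t|) (f y)
  calc ∫⁻ t in s, logPotential μ (c t)
      = ∫⁻ y, (∫⁻ t in s, logKernel (dist (c t) y)) ∂μ :=
        lintegral_lintegral_swap
          (measurable_logKernel.comp (Continuous.measurable (by fun_prop))).aemeasurable
    _ ≤ ∫⁻ _, (∫⁻ t : ℝ, logKernel |t|) ∂μ := lintegral_mono h_inner
    _ = (∫⁻ t : ℝ, logKernel |t|) * μ univ := lintegral_const _

end LogEnergy

section Conditioning

variable {α : Type*} [MeasurableSpace α] {ν : Measure α} {A : Set α}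

lemma relEnt_cond [IsFiniteMeasure ν] (hA : MeasurableSet A) (hA₀ : ν A ≠ 0) :
    relEnt ν[|A] ν = ENNReal.ofReal (-Real.log (ν.real A)) := by
  have hac : ν[|A] ≪ ν := cond_absolutelyContinuous
  have : IsProbabilityMeasure ν[|A] := cond_isProbabilityMeasure hA₀
  have h_density : ∀ᵐ x ∂ν[|A],
      Real.log (ν[|A].rnDeriv ν x).toReal = -Real.log (ν.real A) := by
    filter_upwards [hac.ae_le (Measure.rnDeriv_smul_left_of_ne_top' (ν.restrict A) ν
        (ENNReal.inv_ne_top.2 hA₀)), hac.ae_le (Measure.rnDeriv_restrict_self ν hA),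
      ae_cond_mem hA] with x h_smul h_restrict hx
    simp only [ProbabilityTheory.cond, h_smul, Pi.smul_apply, h_restrict, indicator_of_mem hx,
      Pi.one_apply, smul_eq_mul, mul_one, ENNReal.toReal_inv, Real.log_inv, Measure.real]
  have h_integrable : Integrable (fun x => Real.log (ν[|A].rnDeriv ν x).toReal) ν[|A] :=
    (integrable_congr h_density).2 (integrable_const _)
  rw [relEnt, if_pos ⟨hac, h_integrable⟩, integral_congr_ae h_density, integral_const,
    probReal_univ, one_smul]

lemma toReal_relEnt_cond [IsProbabilityMeasure ν] (hA : MeasurableSet A) (hA₀ : ν A ≠ 0) :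
    (relEnt ν[|A] ν).toReal = -Real.log (ν.real A) := by
  rw [relEnt_cond hA hA₀, ENNReal.toReal_ofReal]
  exact neg_nonneg.2 (Real.log_nonpos measureReal_nonneg measureReal_le_one)

lemma isNegInvariant_cond [InvolutiveNeg α] [MeasurableNeg α] [ν.IsNegInvariant]
    (hA : MeasurableSet A) (hA_neg : -A = A) : ν[|A].IsNegInvariant := by
  have h_restrict := (Measure.measurePreserving_neg ν).restrict_preimage hA
  rw [neg_preimage, hA_neg] at h_restrict
  exact ⟨(Measure.map_smul _ _ _).trans (congrArg _ h_restrict.map_eq)⟩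

end Conditioning

lemma integral_id_eq_zero_of_isNegInvariant {E : Type*} [NormedAddCommGroup E] [NormedSpace ℝ E]
    [MeasurableSpace E] [MeasurableNeg E] (μ : Measure E) [μ.IsNegInvariant] : ∫ x, x ∂μ = 0 :=
  have : IsAddTorsionFree E := .of_isTorsionFree ℝ E
  self_eq_neg.1 (by rw [← integral_neg, integral_neg_eq_self (fun x => x)])

lemma lintegral_measure_ball_comm {X : Type*} [PseudoMetricSpace X] [SecondCountableTopology X]
    [MeasurableSpace X] [OpensMeasurableSpace X] (μ ν : Measure X) [SFinite μ] [SFinite ν] (r : ℝ) :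
    ∫⁻ x, μ (ball x r) ∂ν = ∫⁻ y, ν (ball y r) ∂μ := by
  have h_meas : MeasurableSet {p : X × X | dist p.2 p.1 < r} :=
    (isOpen_lt (by fun_prop) continuous_const).measurableSet
  have h_prod := (Measure.prod_apply (μ := ν) (ν := μ) h_meas).symm.trans
    (Measure.prod_apply_symm h_meas)
  simpa only [preimage_ofPred_eq, ball, dist_comm] using h_prod

section SphericalShell

lemma one_add_pow_sub_one_sub_pow_le (n : ℕ) {r : ℝ} (hr₀ : 0 ≤ r) (hr₁ : r ≤ 1) :
    (1 + r) ^ n - (1 - r) ^ n ≤ n * 2 ^ n * r := by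
  rcases n with _ | n
  · simp
  calc (1 + r) ^ (n + 1) - (1 - r) ^ (n + 1)
      ≤ |(1 + r) - (1 - r)| * ↑(n + 1) * max |1 + r| |1 - r| ^ n :=
        (le_abs_self _).trans (abs_pow_sub_pow_le _ _ _)
    _ ≤ (2 * r) * ↑(n + 1) * 2 ^ n := by
        gcongr
        · exact abs_le.2 ⟨by linarith, by linarith⟩
        · exact max_le (abs_le.2 ⟨by linarith, by linarith⟩) (abs_le.2 ⟨by linarith, by linarith⟩)
    _ = ↑(n + 1) * 2 ^ (n + 1) * r := by ring

variable {E : Type*} [NormedAddCommGroup E]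

/-- The shell of half-width `r` around the unit sphere. -/
def sphericalShell (E : Type*) [NormedAddCommGroup E] (r : ℝ) : Set E :=
  ball 0 (1 + r) \ ball 0 (1 - r)

lemma mem_sphericalShell {x : E} {r : ℝ} :
    x ∈ sphericalShell E r ↔ ‖x‖ < 1 + r ∧ 1 - r ≤ ‖x‖ := by
  simp [sphericalShell]

lemma ball_subset_sphericalShell {x : E} (hx : ‖x‖ = 1) (r : ℝ) :
    ball x r ⊆ sphericalShell E r := by
  intro y hy
  rw [mem_ball, dist_eq_norm] at hy
  rw [mem_sphericalShell]
  constructor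
  · linarith [norm_sub_norm_le y x]
  · linarith [norm_sub_norm_le x y, norm_sub_rev x y]

variable [MeasurableSpace E] [BorelSpace E]

lemma measurableSet_sphericalShell (r : ℝ) : MeasurableSet (sphericalShell E r) :=
  measurableSet_ball.diff measurableSet_ball

variable [NormedSpace ℝ E] [FiniteDimensional ℝ E]

lemma addHaar_sphericalShell_le (μ : Measure E) [μ.IsAddHaarMeasure] {r : ℝ} (hr₀ : 0 < r)
    (hr₁ : r < 1) :
    μ (sphericalShell E r) ≤
      ENNReal.ofReal (finrank ℝ E * 2 ^ finrank ℝ E * r) * μ (ball 0 1) := by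
  have h_inner : 0 < 1 - r := sub_pos.2 hr₁
  rw [sphericalShell, measure_sdiff (ball_subset_ball (by linarith))
      measurableSet_ball.nullMeasurableSet measure_ball_lt_top.ne,
    μ.addHaar_ball_of_pos _ (by linarith), μ.addHaar_ball_of_pos _ h_inner,
    ← ENNReal.sub_mul fun _ _ => measure_ball_lt_top.ne, ← ENNReal.ofReal_sub _ (by positivity)]
  gcongr
  exact one_add_pow_sub_one_sub_pow_le _ hr₀.le hr₁.le

end SphericalShell

lemma finrank_pos_of_norm_eq_one {E : Type*} [NormedAddCommGroup E] [NormedSpace ℝ E]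
    [FiniteDimensional ℝ E] {e : E} (he : ‖e‖ = 1) : 0 < finrank ℝ E :=
  finrank_pos_iff_exists_ne_zero.2 ⟨e, norm_ne_zero_iff.1 (by simp [he])⟩

lemma exists_sphere_curve_with_lipschitz_coordinate {E : Type*} [NormedAddCommGroup E]
    [InnerProductSpace ℝ E] (hE : 2 ≤ finrank ℝ E) :
    ∃ (c : ℝ → E) (f : E → ℝ), Continuous c ∧ LipschitzWith 1 f ∧
      ∀ t ∈ Icc (-1) 1, ‖c t‖ = 1 ∧ f (c t) = t := by
  have : FiniteDimensional ℝ E := .of_finrank_pos (by omega)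
  let b := stdOrthonormalBasis ℝ E
  let u := b ⟨0, by omega⟩
  let v := b ⟨1, by omega⟩
  have hu : ‖u‖ = 1 := b.norm_eq_one _
  have hv : ‖v‖ = 1 := b.norm_eq_one _
  have huv : ⟪u, v⟫ = 0 := b.inner_eq_zero (by simp)
  refine ⟨fun t => √(1 - t ^ 2) • u + t • v, fun x => ⟪x, v⟫, by fun_prop, ?_, fun t ht => ⟨?_, ?_⟩⟩
  · refine LipschitzWith.mk_one fun x y => ?_
    calc dist ⟪x, v⟫ ⟪y, v⟫ = |⟪x - y, v⟫| := by rw [Real.dist_eq, inner_sub_left]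
      _ ≤ ‖x - y‖ * ‖v‖ := abs_real_inner_le_norm _ _
      _ = dist x y := by rw [hv, mul_one, dist_eq_norm]
  · have h_sq : 0 ≤ 1 - t ^ 2 := by nlinarith [ht.1, ht.2]
    have h_orth : ⟪√(1 - t ^ 2) • u, t • v⟫ = 0 := by
      rw [real_inner_smul_left, real_inner_smul_right, huv, mul_zero, mul_zero]
    rw [← sq_eq_sq₀ (norm_nonneg _) zero_le_one, sq,
      norm_add_sq_eq_norm_sq_add_norm_sq_of_inner_eq_zero _ _ h_orth, norm_smul, norm_smul, hu, hv,
      mul_one, mul_one, Real.norm_eq_abs, Real.norm_eq_abs, abs_mul_abs_self, abs_mul_abs_self,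
      Real.mul_self_sqrt h_sq]
    ring
  · simp only [inner_add_left, real_inner_smul_left, huv, real_inner_self_eq_norm_sq, hv]
    ring

lemma isNegInvariant_of_rotation_invariant {E : Type*} [NormedAddCommGroup E]
    [InnerProductSpace ℝ E] [MeasurableSpace E] {σ : Measure E}
    (hσinv : ∀ R : E ≃ₗᵢ[ℝ] E, σ.map R = σ) :
    σ.IsNegInvariant :=
  ⟨hσinv (LinearIsometryEquiv.neg ℝ)⟩

section RotationInvariant

variable {E : Type*} [NormedAddCommGroup E] [InnerProductSpace ℝ E] [MeasurableSpace E]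
  [BorelSpace E] {σ : Measure E}

lemma map_dist_eq_of_norm_eq (hσinv : ∀ R : E ≃ₗᵢ[ℝ] E, σ.map R = σ) {x y : E} (h : ‖x‖ = ‖y‖) :
    σ.map (dist x) = σ.map (dist y) := by
  obtain ⟨R, rfl⟩ : ∃ R : E ≃ₗᵢ[ℝ] E, R x = y := ⟨_, Submodule.reflection_sub h⟩
  conv_rhs => rw [← hσinv R]
  rw [Measure.map_map (by fun_prop) R.continuous.measurable]
  congr 1
  ext z
  exact (R.dist_map x z).symm

lemma measure_ball_eq_of_norm_eq (hσinv : ∀ R : E ≃ₗᵢ[ℝ] E, σ.map R = σ) {x y : E}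
    (h : ‖x‖ = ‖y‖) (r : ℝ) : σ (ball x r) = σ (ball y r) := by
  have h_ball (z : E) : σ (ball z r) = σ.map (dist z) (Iio r) := by
    rw [Measure.map_apply (by fun_prop) measurableSet_Iio]
    congr 1
    ext w
    simp [dist_comm]
  rw [h_ball, h_ball, map_dist_eq_of_norm_eq hσinv h]

lemma logPotential_eq_of_norm_eq (hσinv : ∀ R : E ≃ₗᵢ[ℝ] E, σ.map R = σ) {x y : E}
    (h : ‖x‖ = ‖y‖) : logPotential σ x = logPotential σ y := by
  have h_map (z : E) : logPotential σ z = ∫⁻ t, logKernel t ∂σ.map (dist z) :=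
    (lintegral_map measurable_logKernel (by fun_prop)).symm
  rw [h_map, h_map, map_dist_eq_of_norm_eq hσinv h]

lemma measure_ball_le_of_mem_sphericalShell (hσinv : ∀ R : E ≃ₗᵢ[ℝ] E, σ.map R = σ)
    {e x : E} (he : ‖e‖ = 1) {r : ℝ} (hr : r < 1) (hx : x ∈ sphericalShell E r) :
    σ (ball x r) ≤ σ (ball e (2 * r)) := by
  obtain ⟨hx_lt, hx_ge⟩ := mem_sphericalShell.1 hx
  have hx₀ : x ≠ 0 := norm_pos_iff.1 (by linarith)
  have h_unit : ‖‖x‖⁻¹ • x‖ = 1 := norm_smul_inv_norm (𝕜 := ℝ) hx₀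
  have h_dist : dist x (‖x‖⁻¹ • x) ≤ r := by
    have h_sub : x - ‖x‖⁻¹ • x = (‖x‖ - 1) • (‖x‖⁻¹ • x) := by
      rw [sub_smul, one_smul, smul_inv_smul₀ (norm_ne_zero_iff.2 hx₀)]
    rw [dist_eq_norm, h_sub, norm_smul, h_unit, mul_one, Real.norm_eq_abs]
    exact abs_le.2 ⟨by linarith, by linarith⟩
  calc σ (ball x r) ≤ σ (ball (‖x‖⁻¹ • x) (2 * r)) :=
        measure_mono (ball_subset_ball' (by linarith))
    _ = σ (ball e (2 * r)) :=
        measure_ball_eq_of_norm_eq hσinv (h_unit.trans he.symm) _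

section CapMass

variable [FiniteDimensional ℝ E] [IsProbabilityMeasure σ]

-- Double counting of the pairs at distance `< r` with one point in the shell and one on the sphere.
lemma pow_finrank_le_measureReal_ball (hσs : ∀ᵐ x ∂σ, ‖x‖ = 1)
    (hσinv : ∀ R : E ≃ₗᵢ[ℝ] E, σ.map R = σ) {e : E} (he : ‖e‖ = 1) {r : ℝ} (hr₀ : 0 < r)
    (hr₁ : r < 1) :
    r ^ finrank ℝ E ≤ σ.real (ball e (2 * r)) * (finrank ℝ E * 2 ^ finrank ℝ E * r) := by
  set shell := sphericalShell E r
  have h_ennreal : ENNReal.ofReal (r ^ finrank ℝ E) * volume (ball (0 : E) 1) ≤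
      σ (ball e (2 * r)) * ENNReal.ofReal (finrank ℝ E * 2 ^ finrank ℝ E * r) *
        volume (ball (0 : E) 1) :=
    calc ENNReal.ofReal (r ^ finrank ℝ E) * volume (ball (0 : E) 1)
        = ∫⁻ _, volume (ball (0 : E) r) ∂σ := by
          rw [lintegral_const, measure_univ, mul_one, Measure.addHaar_ball_of_pos _ _ hr₀]
      _ = ∫⁻ y, volume.restrict shell (ball y r) ∂σ := by
          refine lintegral_congr_ae ?_
          filter_upwards [hσs] with y hy
          rw [Measure.restrict_eq_self _ (ball_subset_sphericalShell hy r),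
            Measure.addHaar_ball_center _ y]
      _ = ∫⁻ x in shell, σ (ball x r) := (lintegral_measure_ball_comm _ _ r).symm
      _ ≤ ∫⁻ _ in shell, σ (ball e (2 * r)) :=
          setLIntegral_mono' (measurableSet_sphericalShell r) fun _ =>
            measure_ball_le_of_mem_sphericalShell hσinv he hr₁
      _ = σ (ball e (2 * r)) * volume shell := setLIntegral_const _ _
      _ ≤ _ := by
          rw [mul_assoc]
          gcongr
          exact addHaar_sphericalShell_le volume hr₀ hr₁
  have h_cancel := (ENNReal.mul_le_mul_iff_left (measure_ball_pos volume (0 : E) one_pos).ne'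
    measure_ball_lt_top.ne).1 h_ennreal
  have h_toReal := ENNReal.toReal_mono (by finiteness) h_cancel
  rwa [ENNReal.toReal_mul, ENNReal.toReal_ofReal (by positivity),
    ENNReal.toReal_ofReal (by positivity)] at h_toReal

lemma le_measureReal_ball (hσs : ∀ᵐ x ∂σ, ‖x‖ = 1) (hσinv : ∀ R : E ≃ₗᵢ[ℝ] E, σ.map R = σ)
    {e : E} (he : ‖e‖ = 1) {r : ℝ} (hr₀ : 0 < r) (hr₂ : r < 2) :
    (r / 2) ^ (finrank ℝ E - 1) / (finrank ℝ E * 2 ^ finrank ℝ E) ≤ σ.real (ball e r) := by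
  have h_dim := finrank_pos_of_norm_eq_one he
  have h_pow := pow_finrank_le_measureReal_ball hσs hσinv he (half_pos hr₀) (by linarith)
  rw [mul_div_cancel₀ r two_ne_zero, ← pow_sub_one_mul h_dim.ne', ← mul_assoc,
    mul_le_mul_iff_left₀ (half_pos hr₀)] at h_pow
  exact (div_le_iff₀ (by positivity)).2 h_pow

end CapMass

section FiniteEnergy

-- The potential is constant on the sphere, so averaging it along a curve there bounds its value.
lemma logEnergy_ne_top_of_rotation_invariant [IsFiniteMeasure σ] (hE : 2 ≤ finrank ℝ E)
    (hσs : ∀ᵐ x ∂σ, ‖x‖ = 1) (hσinv : ∀ R : E ≃ₗᵢ[ℝ] E, σ.map R = σ) : logEnergy σ ≠ ∞ := by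
  have : FiniteDimensional ℝ E := .of_finrank_pos (by omega)
  obtain ⟨c, f, hc, hf, hcf⟩ := exists_sphere_curve_with_lipschitz_coordinate hE
  have h_const {x : E} (hx : ‖x‖ = 1) : logPotential σ x = logPotential σ (c 0) :=
    logPotential_eq_of_norm_eq hσinv (hx.trans (hcf 0 (by norm_num)).1.symm)
  have h_average : logPotential σ (c 0) * volume (Icc (-1 : ℝ) 1) ≤
      (∫⁻ t : ℝ, logKernel |t|) * σ univ :=
    calc logPotential σ (c 0) * volume (Icc (-1 : ℝ) 1)
        = ∫⁻ t in Icc (-1 : ℝ) 1, logPotential σ (c t) := by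
          rw [← setLIntegral_const]
          exact setLIntegral_congr_fun measurableSet_Icc fun t ht => (h_const (hcf t ht).1).symm
      _ ≤ _ := setLIntegral_logPotential_curve_le hc hf measurableSet_Icc fun t ht => (hcf t ht).2
  have h_finite : logPotential σ (c 0) ≠ ∞ := by
    refine (ENNReal.lt_top_of_mul_ne_top_left (ne_top_of_le_ne_top
      (ENNReal.mul_ne_top lintegral_logKernel_abs_ne_top (measure_ne_top σ _)) h_average) ?_).ne
    norm_num [Real.volume_Icc]
  rw [logEnergy_eq_lintegral_logPotential,
    lintegral_congr_ae (hσs.mono fun _ => h_const), lintegral_const]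
  exact ENNReal.mul_ne_top h_finite (measure_ne_top σ _)

end FiniteEnergy

end RotationInvariant

section AntipodalCaps

variable {E : Type*} [NormedAddCommGroup E]

/-- The union of the balls of radius `r` around the antipodal points `e` and `-e`. Conditioning
the uniform measure of the sphere on it gives the destabilizing family. -/
def antipodalCaps (e : E) (r : ℝ) : Set E := ball e r ∪ ball (-e) r

lemma antipodalCaps_neg (e : E) (r : ℝ) : antipodalCaps (-e) r = antipodalCaps e r := by
  rw [antipodalCaps, neg_neg, union_comm, antipodalCaps]

lemma neg_antipodalCaps (e : E) (r : ℝ) : -antipodalCaps e r = antipodalCaps e r := by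
  rw [antipodalCaps, union_neg, neg_ball, neg_ball, neg_neg, union_comm]

lemma measurableSet_antipodalCaps [MeasurableSpace E] [OpensMeasurableSpace E] (e : E) (r : ℝ) :
    MeasurableSet (antipodalCaps e r) :=
  measurableSet_ball.union measurableSet_ball

variable [InnerProductSpace ℝ E]

lemma disjoint_ball_neg {e : E} {r : ℝ} (hr : r ≤ ‖e‖) : Disjoint (ball e r) (ball (-e) r) := by
  refine ball_disjoint_ball ?_
  rw [dist_eq_norm, sub_neg_eq_add, ← two_smul ℝ e, norm_smul, Real.norm_ofNat]
  linarith

variable [MeasurableSpace E] [BorelSpace E] {σ : Measure E}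

lemma measure_antipodalCaps (hσinv : ∀ R : E ≃ₗᵢ[ℝ] E, σ.map R = σ) {e : E} {r : ℝ}
    (hr : r ≤ ‖e‖) : σ (antipodalCaps e r) = 2 * σ (ball e r) := by
  rw [antipodalCaps, measure_union (disjoint_ball_neg hr) measurableSet_ball,
    measure_ball_eq_of_norm_eq hσinv (norm_neg e), two_mul]

lemma cond_antipodalCaps_ball [IsFiniteMeasure σ] (hσinv : ∀ R : E ≃ₗᵢ[ℝ] E, σ.map R = σ) {e : E}
    {r : ℝ} (hr : r ≤ ‖e‖) (hσe : σ (antipodalCaps e r) ≠ 0) :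
    σ[|antipodalCaps e r] (ball e r) = 2⁻¹ := by
  rw [measure_antipodalCaps hσinv hr] at hσe
  have h_subset : ball e r ⊆ antipodalCaps e r := subset_union_left
  rw [cond_apply (measurableSet_antipodalCaps e r), inter_eq_right.2 h_subset,
    measure_antipodalCaps hσinv hr, ENNReal.mul_inv (by simp) (by simp), mul_assoc,
    ENNReal.inv_mul_cancel (right_ne_zero_of_mul hσe) (measure_ne_top σ _), mul_one]

lemma half_neg_log_le_logEnergy [IsFiniteMeasure σ] (hσinv : ∀ R : E ≃ₗᵢ[ℝ] E, σ.map R = σ) {e : E}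
    {r : ℝ} (hr₀ : r ≠ 0) (hr : r ≤ ‖e‖) (hσe : σ (antipodalCaps e r) ≠ 0)
    (h_energy : logEnergy σ[|antipodalCaps e r] ≠ ∞) :
    -Real.log r / 2 ≤ (logEnergy σ[|antipodalCaps e r]).toReal := by
  have h_neg : σ[|antipodalCaps e r] (ball (-e) r) = 2⁻¹ := by
    rw [← antipodalCaps_neg] at hσe ⊢
    exact cond_antipodalCaps_ball hσinv (hr.trans_eq (norm_neg e).symm) hσe
  have h_le := logKernel_mul_measure_ball_sq_le_logEnergy (μ := σ[|antipodalCaps e r])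
    (disjoint_ball_neg hr)
  rw [cond_antipodalCaps_ball hσinv hr hσe, h_neg, logKernel_two_mul hr₀] at h_le
  have h_toReal := ENNReal.toReal_mono h_energy h_le
  calc -Real.log r / 2 ≤ (ENNReal.ofReal (-Real.log r)).toReal / 2 := by
        gcongr
        exact (le_max_left _ _).trans_eq ENNReal.toReal_ofReal'.symm
    _ = (ENNReal.ofReal (-Real.log r) * (2⁻¹ ^ 2 + 2⁻¹ ^ 2)).toReal := by
        rw [ENNReal.toReal_mul, ENNReal.toReal_add (by simp) (by simp)]
        norm_num
        ring
    _ ≤ _ := h_toReal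

variable [FiniteDimensional ℝ E] [IsProbabilityMeasure σ]

lemma le_measureReal_antipodalCaps (hσs : ∀ᵐ x ∂σ, ‖x‖ = 1)
    (hσinv : ∀ R : E ≃ₗᵢ[ℝ] E, σ.map R = σ) {e : E} (he : ‖e‖ = 1) {r : ℝ} (hr₀ : 0 < r)
    (hr₂ : r < 2) :
    (r / 2) ^ (finrank ℝ E - 1) / (finrank ℝ E * 2 ^ finrank ℝ E) ≤ σ.real (antipodalCaps e r) :=
  (le_measureReal_ball hσs hσinv he hr₀ hr₂).trans (measureReal_mono subset_union_left)

lemma exists_toReal_relEnt_cond_antipodalCaps_le (hσs : ∀ᵐ x ∂σ, ‖x‖ = 1)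
    (hσinv : ∀ R : E ≃ₗᵢ[ℝ] E, σ.map R = σ) {e : E} (he : ‖e‖ = 1) :
    ∃ K : ℝ, ∀ r ∈ Ioo 0 2, σ (antipodalCaps e r) ≠ 0 ∧
      (relEnt σ[|antipodalCaps e r] σ).toReal ≤ (finrank ℝ E - 1) * -Real.log r + K := by
  refine ⟨(finrank ℝ E - 1) * Real.log 2 + Real.log (finrank ℝ E * 2 ^ finrank ℝ E),
    fun r ⟨hr₀, hr₂⟩ => ?_⟩
  have h_dim := finrank_pos_of_norm_eq_one he
  have h_mass := le_measureReal_antipodalCaps hσs hσinv he hr₀ hr₂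
  have h_bound_pos :
      0 < (r / 2) ^ (finrank ℝ E - 1) / ((finrank ℝ E : ℝ) * 2 ^ finrank ℝ E) := by positivity
  have h_ne : σ (antipodalCaps e r) ≠ 0 := (measureReal_ne_zero_iff (measure_ne_top σ _)).1
    (h_bound_pos.trans_le h_mass).ne'
  have h_log := Real.log_le_log h_bound_pos h_mass
  rw [Real.log_div (by positivity) (by positivity), Real.log_pow,
    Real.log_div hr₀.ne' two_ne_zero, Nat.cast_pred h_dim] at h_log
  refine ⟨h_ne, ?_⟩
  rw [toReal_relEnt_cond (measurableSet_antipodalCaps e r) h_ne]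
  linarith

end AntipodalCaps

lemma exists_lt_mul_neg_log {ε : ℝ} (hε : 0 < ε) (K : ℝ) :
    ∃ r ∈ Ioo (0 : ℝ) 1, K < ε * -Real.log r := by
  have h_tendsto : Filter.Tendsto (fun r => ε * -Real.log r) (𝓝[>] 0) Filter.atTop :=
    (Filter.tendsto_neg_atBot_atTop.comp Real.tendsto_log_nhdsGT_zero).const_mul_atTop hε
  obtain ⟨r, hr, hr_mem⟩ := ((h_tendsto.eventually_gt_atTop K).and
    (Ioo_mem_nhdsGT (zero_lt_one' ℝ))).exists
  exact ⟨r, hr_mem, hr⟩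

theorem log_HLS_fails_beyond_two_general {E : Type*} [NormedAddCommGroup E] [InnerProductSpace ℝ E]
    [MeasurableSpace E] [BorelSpace E] (hE : 2 ≤ finrank ℝ E)
    (σ : Measure E) [IsProbabilityMeasure σ] (hσs : σ (sphere (0 : E) 1) = 1)
    (hσinv : ∀ R : E ≃ₗᵢ[ℝ] E, σ.map R = σ) (γ : ℝ) (hγ : (finrank ℝ E : ℝ) - 1 < γ) :
    ∀ C : ℝ, ∃ μ : Measure E, IsProbabilityMeasure μ ∧
      μ (sphere (0 : E) 1) = 1 ∧ (∫ x, x ∂μ) = 0 ∧ μ ≪ σ ∧ relEnt μ σ ≠ ∞ ∧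
      (∫⁻ p : E × E, ENNReal.ofReal (Real.log 2 - Real.log (dist p.1 p.2)) ∂(μ.prod μ)) ≠ ∞ ∧
      (relEnt μ σ).toReal + C <
        2 * γ *
          ((∫⁻ p : E × E,
              ENNReal.ofReal (Real.log 2 - Real.log (dist p.1 p.2)) ∂(μ.prod μ)).toReal -
            Real.log 2) := by
  intro C
  have : FiniteDimensional ℝ E := .of_finrank_pos (by omega)
  have : Nontrivial E := nontrivial_of_finrank_pos (R := ℝ) (by omega)
  have hσ_ae : ∀ᵐ x ∂σ, x ∈ sphere 0 1 :=
    (mem_ae_iff_prob_eq_one isClosed_sphere.measurableSet).2 hσs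
  have hσ_norm : ∀ᵐ x ∂σ, ‖x‖ = 1 := hσ_ae.mono fun _ => mem_sphere_zero_iff_norm.1
  obtain ⟨e, he⟩ := exists_norm_eq E zero_le_one
  obtain ⟨K, hK⟩ := exists_toReal_relEnt_cond_antipodalCaps_le hσ_norm hσinv he
  obtain ⟨r, ⟨hr₀, hr₁⟩, hr⟩ :=
    exists_lt_mul_neg_log (sub_pos.2 hγ) (K + C + 2 * γ * Real.log 2)
  obtain ⟨hA₀, h_entropy⟩ := hK r ⟨hr₀, by linarith⟩
  have hA := measurableSet_antipodalCaps e r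
  have h_energy_top : logEnergy σ[|antipodalCaps e r] ≠ ∞ :=
    logEnergy_cond_ne_top hA₀ (logEnergy_ne_top_of_rotation_invariant hE hσ_norm hσinv)
  have h_energy :=
    half_neg_log_le_logEnergy hσinv hr₀.ne' (hr₁.le.trans_eq he.symm) hA₀ h_energy_top
  have := isNegInvariant_of_rotation_invariant hσinv
  have := isNegInvariant_cond (ν := σ) hA (neg_antipodalCaps e r)
  have h_prob : IsProbabilityMeasure σ[|antipodalCaps e r] := cond_isProbabilityMeasure hA₀
  refine ⟨σ[|antipodalCaps e r], h_prob,
    (mem_ae_iff_prob_eq_one isClosed_sphere.measurableSet).1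
      (cond_absolutelyContinuous.ae_le hσ_ae),
    integral_id_eq_zero_of_isNegInvariant _, cond_absolutelyContinuous,
    relEnt_cond hA hA₀ ▸ ENNReal.ofReal_ne_top, ?_, ?_⟩
  · rwa [lintegral_ofReal_log_dist_eq_logEnergy h_energy_top]
  · rw [lintegral_ofReal_log_dist_eq_logEnergy h_energy_top]
    have h_dim : (2 : ℝ) ≤ finrank ℝ E := by exact_mod_cast hE
    linarith [mul_le_mul_of_nonneg_left h_energy (by linarith : 0 ≤ 2 * γ)]

/-- **Failure of the logarithmic HLS inequality beyond the threshold 2.** Let `σ` be the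
rotation-invariant Borel probability measure on the unit sphere `S² ⊂ ℝ³` and let `γ > 2`.
For every `C ∈ ℝ` there is a Borel probability measure `μ` on `S²`, absolutely continuous
with respect to `σ`, with vanishing barycenter and with finite entropy and finite energy,
such that `2γ ∬ log(1/|x-y|) dμ dμ > D(μ‖σ) + C`; i.e. the infimum over such `μ` of
`D(μ‖σ) - 2γ ∬ log(1/|x-y|) dμ dμ` is `-∞`. (Here `∬ log(1/|x-y|) dμ dμ` is expressed as
`(∫⁻ (log 2 - log |x-y|) dμ dμ).toReal - log 2`.) -/
theorem log_HLS_fails_beyond_two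
    (σ : Measure E3) (hσ1 : IsProbabilityMeasure σ)
    (hσs : σ (Metric.sphere (0 : E3) 1) = 1)
    (hσinv : ∀ R : E3 ≃ₗᵢ[ℝ] E3, σ.map R = σ)
    (γ : ℝ) (hγ : 2 < γ) :
    ∀ C : ℝ, ∃ μ : Measure E3, IsProbabilityMeasure μ ∧
      μ (Metric.sphere (0 : E3) 1) = 1 ∧ (∫ x, x ∂μ) = 0 ∧ μ ≪ σ ∧
      relEnt μ σ ≠ ∞ ∧
      (∫⁻ p : E3 × E3,
          ENNReal.ofReal (Real.log 2 - Real.log (dist p.1 p.2)) ∂(μ.prod μ)) ≠ ∞ ∧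
      (relEnt μ σ).toReal + C <
        2 * γ *
          ((∫⁻ p : E3 × E3,
              ENNReal.ofReal (Real.log 2 - Real.log (dist p.1 p.2)) ∂(μ.prod μ)).toReal -
            Real.log 2) := by
  have h_dim : finrank ℝ E3 = 3 := finrank_euclideanSpace_fin
  exact log_HLS_fails_beyond_two_general (by omega) σ hσs hσinv γ (by rw [h_dim]; norm_num [hγ])
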